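/- Let σ > 0 and let (ℓ_i) and (k_i) be strictly increasing sequences of positive integers with ℓ_i/k_i → σ as i → ∞. Then for every ε > 0 there exists i₀ ∈ ℕ such that for all i ≥ i₀, whenever j is the k_i-th positive zero of J_{ℓ_i} and j′ is the k_i-th positive zero of J_{σ·k_i}, one has (1 − ε) · j′/(σ·k_i) < j/ℓ_i < (1 + ε) · j′/(σ·k_i). -/

import Mathlib

open Real Set Filter

/-- The Bessel function of the first kind of order `ν`. -/
noncomputable def besselJ (ν x : ℝ) : ℝ :=
  ∑' m : ℕ, (-1 : ℝ) ^ m / (m.factorial * Real.Gamma (m + ν + 1)) * (x / 2) ^ (2 * (m : ℝ) + ν)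

/-- `j` is the `k`-th positive zero of the Bessel function `J_ν`. -/
def IsKthBesselZero (ν : ℝ) (k : ℕ) (j : ℝ) : Prop :=
  0 < j ∧ besselJ ν j = 0 ∧
    {t : ℝ | t ∈ Set.Ioo 0 j ∧ besselJ ν t = 0}.encard = (k - 1 : ℕ)

noncomputable def bF (ν z : ℝ) : ℝ :=
  ∑' m : ℕ, (-1 : ℝ) ^ m / (m.factorial * Real.Gamma (m + ν + 1)) * z ^ m

lemma bGamma_ge (ν : ℝ) (hν : 0 ≤ ν) (m : ℕ) : Real.Gamma (ν + 1) ≤ Real.Gamma (m + ν + 1) := by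
  induction m with
  | zero => simp
  | succ n ih =>
    have hn : (0:ℝ) ≤ n := Nat.cast_nonneg n
    have h : Real.Gamma ((n + ν + 1) + 1) = (n + ν + 1) * Real.Gamma (n + ν + 1) :=
      Real.Gamma_add_one (by positivity)
    have h2 : ((n + 1 : ℕ) : ℝ) + ν + 1 = (n + ν + 1) + 1 := by push_cast; ring
    rw [h2, h]
    have hp : 0 < Real.Gamma (n + ν + 1) := Real.Gamma_pos_of_pos (by positivity)
    nlinarith

lemma bcoef_le (ν : ℝ) (hν : 0 ≤ ν) (m : ℕ) :
    |(-1 : ℝ) ^ m / (m.factorial * Real.Gamma (m + ν + 1))| ≤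
      (Real.Gamma (ν + 1))⁻¹ / m.factorial := by
  have h0 : 0 < Real.Gamma (ν + 1) := Real.Gamma_pos_of_pos (by positivity)
  have h1 := bGamma_ge ν hν m
  have h2 : (0:ℝ) < m.factorial := by positivity
  rw [abs_div, abs_pow, abs_neg, abs_one, one_pow, abs_of_pos (by nlinarith [mul_pos h2 (h0.trans_le h1)]),
    div_eq_mul_inv, one_mul, mul_inv, div_eq_mul_inv, mul_comm]
  gcongr

lemma bF_summable (ν : ℝ) (hν : 0 ≤ ν) (z : ℝ) :
    Summable (fun m : ℕ => (-1 : ℝ) ^ m / (m.factorial * Real.Gamma (m + ν + 1)) * z ^ m) := by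
  refine Summable.of_norm_bounded
    (g := fun m : ℕ => (Real.Gamma (ν + 1))⁻¹ * (|z| ^ m / m.factorial)) ?_ ?_
  · exact (Real.summable_pow_div_factorial |z|).mul_left _
  · intro m
    rw [Real.norm_eq_abs, abs_mul, abs_pow]
    calc _ ≤ (Real.Gamma (ν + 1))⁻¹ / m.factorial * |z| ^ m := by
          gcongr; exact bcoef_le ν hν m
      _ = _ := by ring

lemma bcoef_succ (ν : ℝ) (m : ℕ) :
    (-1 : ℝ) ^ (m+1) / ((m+1).factorial * Real.Gamma ((m+1 : ℕ) + ν + 1)) * ((m+1 : ℕ) : ℝ) =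
    - ((-1 : ℝ) ^ m / (m.factorial * Real.Gamma (m + (ν + 1) + 1))) := by
  have h2 : ((m + 1 : ℕ) : ℝ) + ν + 1 = m + (ν + 1) + 1 := by push_cast; ring
  rw [h2, Nat.factorial_succ]
  have h3 : ((m + 1 : ℕ) : ℝ) ≠ 0 := by positivity
  have h4 : (m.factorial : ℝ) ≠ 0 := by positivity
  rw [Nat.cast_mul]
  rcases eq_or_ne (Real.Gamma (m + (ν + 1) + 1)) 0 with h | h
  · simp [h]
  · field_simp
    ring

lemma bF_hasDerivAt (ν : ℝ) (hν : 0 ≤ ν) (z : ℝ) :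
    HasDerivAt (bF ν) (- bF (ν + 1) z) z := by
  set R := |z| + 1 with hR
  have hR0 : 0 < R := by positivity
  have key := hasDerivAt_tsum_of_isPreconnected
    (g := fun (m : ℕ) (y : ℝ) => (-1 : ℝ) ^ m / (m.factorial * Real.Gamma (m + ν + 1)) * y ^ m)
    (g' := fun (m : ℕ) (y : ℝ) =>
      (-1 : ℝ) ^ m / (m.factorial * Real.Gamma (m + ν + 1)) * (m * y ^ (m - 1)))
    (u := fun m : ℕ => (Real.Gamma (ν + 1))⁻¹ * (m * R ^ (m - 1) / m.factorial))
    (t := Metric.ball (0:ℝ) R) (y₀ := 0) (y := z) ?_ Metric.isOpen_ball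
    (convex_ball (0:ℝ) R).isPreconnected ?_ ?_ (Metric.mem_ball_self hR0) (bF_summable ν hν 0) ?_
  · refine HasDerivAt.congr_deriv (f := bF ν) key ?_
    have hs : Summable (fun (m : ℕ) =>
      (-1 : ℝ) ^ m / (m.factorial * Real.Gamma (m + ν + 1)) * (m * z ^ (m - 1))) := by
      rw [← summable_nat_add_iff 1]
      refine (bF_summable (ν + 1) (by positivity) z).neg.congr ?_
      intro m
      rw [← mul_assoc, bcoef_succ]; simp
    rw [hs.tsum_eq_zero_add, bF, ← tsum_neg]
    simp only [Nat.cast_zero, zero_mul, mul_zero, zero_add]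
    refine tsum_congr fun m => ?_
    rw [← mul_assoc, bcoef_succ]; simp
  · refine Summable.mul_left _ ?_
    rw [← summable_nat_add_iff 1]
    refine (Real.summable_pow_div_factorial R).congr fun m => ?_
    rw [Nat.factorial_succ]
    have h3 : ((m + 1 : ℕ) : ℝ) ≠ 0 := by positivity
    have h4 : (m.factorial : ℝ) ≠ 0 := by positivity
    rw [Nat.cast_mul]
    simp only [Nat.add_sub_cancel]
    field_simp
  · intro m y _
    exact (hasDerivAt_pow m y).const_mul _
  · intro m y hy
    have hy' : |y| ≤ R := by
      have := Metric.mem_ball.1 hy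
      rw [Real.dist_eq, sub_zero] at this
      exact this.le
    rw [Real.norm_eq_abs, abs_mul, abs_mul, abs_pow, Nat.abs_cast]
    calc _ ≤ (Real.Gamma (ν + 1))⁻¹ / m.factorial * (m * R ^ (m-1)) := by
          gcongr; exact bcoef_le ν hν m
      _ = _ := by ring
  · rw [Metric.mem_ball, Real.dist_eq, sub_zero, hR]; linarith

lemma bF_rec (ν : ℝ) (hν : 0 ≤ ν) (z : ℝ) :
    bF ν z = (ν + 1) * bF (ν + 1) z - z * bF (ν + 1 + 1) z := by
  have h1 := bF_summable (ν + 1) (by positivity) z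
  have h2 := bF_summable (ν + 1 + 1) (by positivity) z
  have hs0 : ∀ m : ℕ, (-1 : ℝ) ^ (m+1) / ((m+1).factorial * Real.Gamma ((m+1 : ℕ) + (ν + 1) + 1)) * (((m+1 : ℕ) : ℝ) * z ^ (m+1)) = -(z * ((-1 : ℝ) ^ m / (m.factorial * Real.Gamma (m + (ν + 1 + 1) + 1)) * z ^ m)) := by
    intro m
    rw [← mul_assoc, bcoef_succ]; ring
  have hs : Summable (fun (m : ℕ) =>
      (-1 : ℝ) ^ m / (m.factorial * Real.Gamma (m + (ν + 1) + 1)) * (m * z ^ m)) := by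
    rw [← summable_nat_add_iff 1]
    exact (h2.mul_left z).neg.congr fun m => (hs0 m).symm
  have e2 : ∑' (m : ℕ), (-1 : ℝ) ^ m / (m.factorial * Real.Gamma (m + (ν + 1) + 1)) * (m * z ^ m)
      = - (z * bF (ν + 1 + 1) z) := by
    rw [hs.tsum_eq_zero_add, bF, ← tsum_mul_left, ← tsum_neg]
    simp only [Nat.cast_zero, zero_mul, mul_zero, zero_add]
    exact tsum_congr hs0
  rw [sub_eq_add_neg, ← e2]
  unfold bF
  rw [← tsum_mul_left, ← (h1.mul_left (ν+1)).tsum_add hs]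
  refine tsum_congr fun m => ?_
  have hm : (0:ℝ) ≤ m := Nat.cast_nonneg m
  have h : Real.Gamma ((m + ν + 1) + 1) = (m + ν + 1) * Real.Gamma (m + ν + 1) :=
    Real.Gamma_add_one (by positivity)
  have hp : 0 < Real.Gamma (m + ν + 1) := Real.Gamma_pos_of_pos (by positivity)
  have h4 : (m.factorial : ℝ) ≠ 0 := by positivity
  rw [← add_assoc (m:ℝ) ν 1, h]
  have h5 : (m:ℝ) + ν + 1 ≠ 0 := by positivity
  field_simp
  ring

lemma besselJ_eq (ν x : ℝ) (hx : 0 < x) :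
    besselJ ν x = (x / 2) ^ ν * bF ν ((x / 2) ^ 2) := by
  unfold besselJ bF
  rw [← tsum_mul_left]
  refine tsum_congr fun m => ?_
  rw [Real.rpow_add (by positivity), ← pow_mul]
  have : (x / 2) ^ (2 * (m:ℝ)) = (x / 2) ^ (2 * m) := by
    rw [← Real.rpow_natCast]; push_cast; rfl
  rw [this]; ring

lemma besselJ_zero_iff (ν x : ℝ) (hx : 0 < x) :
    besselJ ν x = 0 ↔ bF ν ((x / 2) ^ 2) = 0 := by
  rw [besselJ_eq ν x hx, mul_eq_zero]
  have : (x / 2) ^ ν ≠ 0 := (Real.rpow_pos_of_pos (by positivity) ν).ne'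
  simp [this]

/-- `U(t)` is `J_ν(c e^{qt})` up to a positive constant. -/
noncomputable def bU (ν q c t : ℝ) : ℝ := exp (ν * q * t) * bF ν ((c * exp (q * t) / 2) ^ 2)

noncomputable def bV (ν q c t : ℝ) : ℝ :=
  ν * q * bU ν q c t
    - 2 * q * (exp (ν * q * t) * ((c * exp (q * t) / 2) ^ 2 * bF (ν + 1) ((c * exp (q * t) / 2) ^ 2)))

lemma bz_deriv (q c t : ℝ) : HasDerivAt (fun t => (c * exp (q * t) / 2) ^ 2)
    (2 * q * (c * exp (q * t) / 2) ^ 2) t := by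
  have h : HasDerivAt (fun t => exp (q * t)) (exp (q * t) * (q * 1)) t :=
    ((hasDerivAt_id t).const_mul q).exp
  have h2 := ((h.const_mul c).div_const 2).pow 2
  refine h2.congr_deriv ?_
  simp; ring

lemma be_deriv (a t : ℝ) : HasDerivAt (fun t => exp (a * t)) (a * exp (a * t)) t := by
  have h : HasDerivAt (fun t => exp (a * t)) (exp (a * t) * (a * 1)) t :=
    ((hasDerivAt_id t).const_mul a).exp
  refine h.congr_deriv ?_
  ring

lemma bU_deriv (ν q c : ℝ) (hν : 0 ≤ ν) (t : ℝ) :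
    HasDerivAt (bU ν q c) (bV ν q c t) t := by
  have h1 := be_deriv (ν * q) t
  have h2 := (bF_hasDerivAt ν hν _).comp t (bz_deriv q c t)
  refine HasDerivAt.congr_deriv (f := bU ν q c) (h1.mul h2) ?_
  simp only [bV, bU, Function.comp]
  ring

lemma bV_deriv (ν q c : ℝ) (hν : 0 ≤ ν) (t : ℝ) :
    HasDerivAt (bV ν q c) (-(q ^ 2 * ((c * exp (q * t)) ^ 2 - ν ^ 2)) * bU ν q c t) t := by
  have h0 := bU_deriv ν q c hν t
  have h1 := be_deriv (ν * q) t
  have h2 := (bF_hasDerivAt (ν + 1) (by positivity) _).comp t (bz_deriv q c t)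
  have h3 := (h0.const_mul (ν * q)).sub ((h1.mul ((bz_deriv q c t).mul h2)).const_mul (2 * q))
  refine HasDerivAt.congr_deriv (f := bV ν q c) h3 ?_
  have hr := bF_rec ν hν ((c * exp (q * t) / 2) ^ 2)
  simp only [bV, bU, Function.comp, Pi.mul_apply]
  rw [hr]
  ring

lemma bU_tendsto (ν q c : ℝ) (hν : 0 < ν) (hq : 0 < q) :
    Tendsto (bU ν q c) atBot (nhds 0) ∧ Tendsto (bV ν q c) atBot (nhds 0) := by
  have he : ∀ a : ℝ, 0 < a → Tendsto (fun t => exp (a * t)) atBot (nhds 0) := fun a ha =>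
    Real.tendsto_exp_atBot.comp (tendsto_id.const_mul_atBot ha)
  have hz : Tendsto (fun t => (c * exp (q * t) / 2) ^ 2) atBot (nhds 0) := by
    have := (((he q hq).const_mul c).div_const 2).pow 2
    simpa using this
  have hF : ∀ μ : ℝ, 0 ≤ μ → Tendsto (fun t => bF μ ((c * exp (q * t) / 2) ^ 2)) atBot
      (nhds (bF μ 0)) := fun μ hμ =>
    ((bF_hasDerivAt μ hμ 0).continuousAt.tendsto).comp hz
  have hU : Tendsto (bU ν q c) atBot (nhds 0) := by
    have := (he (ν * q) (by positivity)).mul (hF ν hν.le)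
    rw [zero_mul] at this
    exact this
  refine ⟨hU, ?_⟩
  have := (hU.const_mul (ν * q)).sub
    (((he (ν * q) (by positivity)).mul (hz.mul (hF (ν + 1) (by positivity)))).const_mul (2 * q))
  simp only [zero_mul, mul_zero, sub_zero] at this
  exact this

lemma bU_zero_iff (ν q c t : ℝ) (hc : 0 < c) :
    bU ν q c t = 0 ↔ besselJ ν (c * exp (q * t)) = 0 := by
  rw [besselJ_zero_iff _ _ (by positivity), bU]
  simp [exp_ne_zero]

/-! Sturm comparison -/

lemma deriv_left_nonpos (u : ℝ → ℝ) (a b v : ℝ) (hab : a < b) (h : HasDerivAt u v b) (hb : u b = 0)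
    (hpos : ∀ t ∈ Ioo a b, 0 < u t) : v ≤ 0 := by
  have h1 := (hasDerivAt_iff_tendsto_slope_left_right.1 h).1
  refine le_of_tendsto h1 ?_
  filter_upwards [Ioo_mem_nhdsLT hab] with t ht
  rw [slope_def_field, hb]
  apply div_nonpos_of_nonneg_of_nonpos
  · linarith [hpos t ht]
  · linarith [ht.2]

lemma deriv_right_nonneg (u : ℝ → ℝ) (a b v : ℝ) (hab : a < b) (h : HasDerivAt u v a) (hb : u a = 0)
    (hpos : ∀ t ∈ Ioo a b, 0 < u t) : 0 ≤ v := by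
  have h1 := (hasDerivAt_iff_tendsto_slope_left_right.1 h).2
  refine ge_of_tendsto h1 ?_
  filter_upwards [Ioo_mem_nhdsGT hab] with t ht
  rw [slope_def_field, hb]
  apply div_nonneg
  · linarith [hpos t ht]
  · linarith [ht.1]

structure IsSol (u v Q : ℝ → ℝ) : Prop where
  d1 : ∀ t, HasDerivAt u (v t) t
  d2 : ∀ t, HasDerivAt v (-(Q t) * u t) t

lemma IsSol.smul {u v Q : ℝ → ℝ} (h : IsSol u v Q) (s : ℝ) :
    IsSol (fun t => s * u t) (fun t => s * v t) Q :=
  ⟨fun t => (h.d1 t).const_mul s, fun t => by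
    refine ((h.d2 t).const_mul s).congr_deriv ?_; ring⟩

lemma wronsk_deriv {u1 v1 Q1 u2 v2 Q2 : ℝ → ℝ} (h1 : IsSol u1 v1 Q1) (h2 : IsSol u2 v2 Q2) (t : ℝ) :
    HasDerivAt (fun t => v1 t * u2 t - u1 t * v2 t) ((Q2 t - Q1 t) * (u1 t * u2 t)) t := by
  refine (((h1.d2 t).mul (h2.d1 t)).sub ((h1.d1 t).mul (h2.d2 t))).congr_deriv ?_
  ring

lemma sturm_end {u1 v1 Q1 u2 v2 Q2 : ℝ → ℝ} (h1 : IsSol u1 v1 Q1) (h2 : IsSol u2 v2 Q2)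
    (a b : ℝ) (hab : a < b) (hb : u1 b = 0)
    (p1 : ∀ t ∈ Ioo a b, 0 < u1 t) (p2 : ∀ t ∈ Ioo a b, 0 < u2 t) :
    v1 b * u2 b - u1 b * v2 b ≤ 0 := by
  have e1 := deriv_left_nonpos u1 a b _ hab (h1.d1 b) hb p1
  have e2 : 0 ≤ u2 b := by
    refine ge_of_tendsto ((h2.d1 b).continuousAt.tendsto.mono_left nhdsWithin_le_nhds :
      Tendsto u2 (nhdsWithin b (Iio b)) _) ?_
    filter_upwards [Ioo_mem_nhdsLT hab] with t ht using (p2 t ht).le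
  rw [hb]
  nlinarith

lemma sturm_fin {u1 v1 Q1 u2 v2 Q2 : ℝ → ℝ} (h1 : IsSol u1 v1 Q1) (h2 : IsSol u2 v2 Q2)
    (a b : ℝ) (hab : a < b) (hQ : ∀ t < b, Q1 t < Q2 t) (ha : u1 a = 0) (hb : u1 b = 0)
    (p1 : ∀ t ∈ Ioo a b, 0 < u1 t) (p2 : ∀ t ∈ Ioo a b, 0 < u2 t) : False := by
  have hend := sturm_end h1 h2 a b hab hb p1 p2
  have e1 := deriv_right_nonneg u1 a b _ hab (h1.d1 a) ha p1
  have e2 : 0 ≤ u2 a := by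
    refine ge_of_tendsto ((h2.d1 a).continuousAt.tendsto.mono_left nhdsWithin_le_nhds :
      Tendsto u2 (nhdsWithin a (Ioi a)) _) ?_
    filter_upwards [Ioo_mem_nhdsGT hab] with t ht using (p2 t ht).le
  have hm : StrictMonoOn (fun t => v1 t * u2 t - u1 t * v2 t) (Icc a b) := by
    refine strictMonoOn_of_deriv_pos (convex_Icc a b)
      (fun t _ => (wronsk_deriv h1 h2 t).continuousAt.continuousWithinAt) ?_
    intro t ht
    rw [interior_Icc] at ht
    rw [(wronsk_deriv h1 h2 t).deriv]
    exact mul_pos (sub_pos.2 (hQ t ht.2)) (mul_pos (p1 t ht) (p2 t ht))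
  have := hm (left_mem_Icc.2 hab.le) (right_mem_Icc.2 hab.le) hab
  simp only [ha] at this
  nlinarith [mul_nonneg e1 e2]

lemma sturm_inf {u1 v1 Q1 u2 v2 Q2 : ℝ → ℝ} (h1 : IsSol u1 v1 Q1) (h2 : IsSol u2 v2 Q2)
    (b : ℝ) (hQ : ∀ t < b, Q1 t < Q2 t) (hb : u1 b = 0)
    (hW : Tendsto (fun t => v1 t * u2 t - u1 t * v2 t) atBot (nhds 0))
    (p1 : ∀ t ∈ Iio b, 0 < u1 t) (p2 : ∀ t ∈ Iio b, 0 < u2 t) : False := by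
  have hend := sturm_end h1 h2 (b - 1) b (by linarith) hb (fun t ht => p1 t ht.2)
    (fun t ht => p2 t ht.2)
  have hm : StrictMonoOn (fun t => v1 t * u2 t - u1 t * v2 t) (Iic b) := by
    refine strictMonoOn_of_deriv_pos (convex_Iic b)
      (fun t _ => (wronsk_deriv h1 h2 t).continuousAt.continuousWithinAt) ?_
    intro t ht
    rw [interior_Iic] at ht
    rw [(wronsk_deriv h1 h2 t).deriv]
    exact mul_pos (sub_pos.2 (hQ t ht)) (mul_pos (p1 t ht) (p2 t ht))
  have i1 : b - 1 ∈ Iic b := by simp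
  have hlt := hm i1 (mem_Iic.2 le_rfl) (by linarith)
  have hge : 0 ≤ v1 (b-1) * u2 (b-1) - u1 (b-1) * v2 (b-1) := by
    refine le_of_tendsto hW ?_
    filter_upwards [Iic_mem_atBot (b - 1)] with t ht
    exact hm.monotoneOn (mem_Iic.2 (by have := mem_Iic.1 ht; linarith)) i1 ht
  simp only at hlt
  linarith

lemma sign_exists (u : ℝ → ℝ) (S : Set ℝ) (hS : IsPreconnected S) (hc : Continuous u)
    (h0 : ∀ t ∈ S, u t ≠ 0) : ∃ s : ℝ, s ≠ 0 ∧ ∀ t ∈ S, 0 < s * u t := by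
  by_cases h : ∀ t ∈ S, 0 < u t
  · exact ⟨1, one_ne_zero, by simpa using h⟩
  · push Not at h
    obtain ⟨x, hx, hux⟩ := h
    refine ⟨-1, by norm_num, fun t ht => ?_⟩
    by_contra hneg
    have h3 : 0 ≤ u t := by linarith
    obtain ⟨y, hy, hy0⟩ := hS.intermediate_value hx ht hc.continuousOn ⟨hux, h3⟩
    exact h0 y hy hy0

lemma sturm_zero {u1 v1 Q1 u2 v2 Q2 : ℝ → ℝ} (h1 : IsSol u1 v1 Q1) (h2 : IsSol u2 v2 Q2)
    (b : ℝ) (hQ : ∀ t < b, Q1 t < Q2 t) (hb : u1 b = 0)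
    (hW : Tendsto (fun t => v1 t * u2 t - u1 t * v2 t) atBot (nhds 0))
    (hfin : {t | t < b ∧ u1 t = 0}.Finite) :
    ∃ z < b, u2 z = 0 ∧ ∀ t, z ≤ t → t < b → u1 t ≠ 0 := by
  have c1 : Continuous u1 := continuous_iff_continuousAt.2 fun t => (h1.d1 t).continuousAt
  have c2 : Continuous u2 := continuous_iff_continuousAt.2 fun t => (h2.d1 t).continuousAt
  rcases Set.eq_empty_or_nonempty {t | t < b ∧ u1 t = 0} with he | hne
  · have hn : ∀ t, t < b → u1 t ≠ 0 := fun t ht h0 => by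
      have : t ∈ {t | t < b ∧ u1 t = 0} := ⟨ht, h0⟩
      rw [he] at this; exact this
    by_contra hcon
    push Not at hcon
    have hn2 : ∀ t ∈ Iio b, u2 t ≠ 0 := by
      intro t ht h0
      obtain ⟨x, _, hx, hx0⟩ := hcon t ht h0
      exact hn x hx hx0
    obtain ⟨s1, _, p1⟩ := sign_exists u1 (Iio b) isPreconnected_Iio c1 (fun t ht => hn t ht)
    obtain ⟨s2, _, p2⟩ := sign_exists u2 (Iio b) isPreconnected_Iio c2 hn2
    refine sturm_inf (h1.smul s1) (h2.smul s2) b hQ (by simp [hb]) ?_ p1 p2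
    have := hW.const_mul (s1 * s2)
    rw [mul_zero] at this
    refine this.congr fun t => by ring
  · obtain ⟨a, ⟨hab, ha⟩, hmax⟩ := hfin.exists_maximal hne
    have hn : ∀ t ∈ Ioo a b, u1 t ≠ 0 := fun t ht h0 => by
      have := hmax ⟨ht.2, h0⟩ ht.1.le
      exact absurd this (not_le.2 ht.1)
    by_contra hcon
    push Not at hcon
    have hn2 : ∀ t ∈ Ioo a b, u2 t ≠ 0 := by
      intro t ht h0
      obtain ⟨x, hx1, hx, hx0⟩ := hcon t ht.2 h0
      exact hn x ⟨ht.1.trans_le hx1, hx⟩ hx0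
    obtain ⟨s1, _, p1⟩ := sign_exists u1 (Ioo a b) isPreconnected_Ioo c1 hn
    obtain ⟨s2, _, p2⟩ := sign_exists u2 (Ioo a b) isPreconnected_Ioo c2 hn2
    exact sturm_fin (h1.smul s1) (h2.smul s2) a b hab hQ (by simp [ha]) (by simp [hb]) p1 p2

lemma sturm_count {u1 v1 Q1 u2 v2 Q2 : ℝ → ℝ} (h1 : IsSol u1 v1 Q1) (h2 : IsSol u2 v2 Q2)
    (b : ℝ) (hQ : ∀ t < b, Q1 t < Q2 t)
    (hW : Tendsto (fun t => v1 t * u2 t - u1 t * v2 t) atBot (nhds 0))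
    (hfin : {t | t < b ∧ u1 t = 0}.Finite) :
    {t | t ≤ b ∧ u1 t = 0}.encard ≤ {t | t < b ∧ u2 t = 0}.encard := by
  have hex : ∀ s ∈ {t | t ≤ b ∧ u1 t = 0}, ∃ z < s, u2 z = 0 ∧ ∀ t, z ≤ t → t < s → u1 t ≠ 0 := by
    rintro s ⟨hs, hs0⟩
    exact sturm_zero h1 h2 s (fun t ht => hQ t (ht.trans_le hs)) hs0 hW
      (hfin.subset fun t ht => ⟨ht.1.trans_le hs, ht.2⟩)
  choose! f hf using hex
  refine Set.encard_le_encard_of_injOn (f := f) ?_ ?_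
  · intro s hs
    exact ⟨(hf s hs).1.trans_le hs.1, (hf s hs).2.1⟩
  · have hlt : ∀ s ∈ {t | t ≤ b ∧ u1 t = 0}, ∀ s' ∈ {t | t ≤ b ∧ u1 t = 0}, s < s' → f s < f s' := by
      intro s hs s' hs' hss
      have : s < f s' := by
        by_contra hc
        exact (hf s' hs').2.2 s (not_lt.1 hc) hss hs.2
      exact (hf s hs).1.trans this
    intro s hs s' hs' he
    rcases lt_trichotomy s s' with h | h | h
    · exact absurd he (hlt s hs s' hs' h).ne
    · exact h
    · exact absurd he (hlt s' hs' s hs h).ne'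

/-! Transfer of counts -/

lemma count_transfer (ν q c T : ℝ) (hq : 0 < q) (hc : 0 < c) :
    {t | t < T ∧ bU ν q c t = 0}.encard =
      {x | x ∈ Ioo 0 (c * exp (q * T)) ∧ besselJ ν x = 0}.encard := by
  have hinj : Function.Injective (fun t => c * exp (q * t)) := by
    intro s t h
    have h2 := exp_injective (mul_left_cancel₀ hc.ne' h)
    exact mul_left_cancel₀ hq.ne' h2
  rw [← hinj.injOn.encard_image]
  congr 1
  ext x
  constructor
  · rintro ⟨t, ⟨ht, h0⟩, rfl⟩
    refine ⟨⟨by positivity, ?_⟩, (bU_zero_iff ν q c t hc).1 h0⟩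
    simp only
    gcongr
  · rintro ⟨⟨hx0, hx⟩, h0⟩
    have hxe : c * exp (q * (Real.log (x / c) / q)) = x := by
      rw [mul_div_cancel₀ _ hq.ne', exp_log (by positivity), mul_div_cancel₀ _ hc.ne']
    refine ⟨Real.log (x / c) / q, ⟨?_, ?_⟩, hxe⟩
    · rw [← hxe] at hx
      have h2 := exp_lt_exp.1 (lt_of_mul_lt_mul_left hx hc.le)
      exact lt_of_mul_lt_mul_left h2 hq.le
    · rw [bU_zero_iff ν q c _ hc, hxe]; exact h0

lemma count_succ (u : ℝ → ℝ) (b : ℝ) (hb : u b = 0) :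
    {t | t ≤ b ∧ u t = 0}.encard = {t | t < b ∧ u t = 0}.encard + 1 := by
  rw [← Set.encard_insert_of_notMem (a := b) (by simp)]
  congr 1
  ext t
  simp only [mem_ofPred_eq, mem_insert_iff]
  constructor
  · rintro ⟨h, h0⟩
    rcases h.lt_or_eq with h | h
    · exact Or.inr ⟨h, h0⟩
    · exact Or.inl h
  · rintro (rfl | ⟨h, h0⟩)
    · exact ⟨le_rfl, hb⟩
    · exact ⟨h.le, h0⟩

lemma bessel_compare (ν q c μ p d T : ℝ) (hν : 0 < ν) (hq : 0 < q) (hc : 0 < c)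
    (hμ : 0 < μ) (hp : 0 < p) (hd : 0 < d)
    (hQ : ∀ t < T, q ^ 2 * ((c * exp (q * t)) ^ 2 - ν ^ 2) < p ^ 2 * ((d * exp (p * t)) ^ 2 - μ ^ 2))
    (k : ℕ) (j j' : ℝ) (hj : IsKthBesselZero ν k j) (hj' : IsKthBesselZero μ k j')
    (hcj : c * exp (q * T) = j) (hdj : d * exp (p * T) ≤ j') : False := by
  obtain ⟨hj0, hjz, hjc⟩ := hj
  obtain ⟨hj0', hjz', hjc'⟩ := hj'
  have s1 : IsSol (bU ν q c) (bV ν q c) _ := ⟨bU_deriv ν q c hν.le, bV_deriv ν q c hν.le⟩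
  have s2 : IsSol (bU μ p d) (bV μ p d) _ := ⟨bU_deriv μ p d hμ.le, bV_deriv μ p d hμ.le⟩
  have t1 := bU_tendsto ν q c hν hq
  have t2 := bU_tendsto μ p d hμ hp
  have hW : Tendsto (fun t => bV ν q c t * bU μ p d t - bU ν q c t * bV μ p d t) atBot (nhds 0) := by
    simpa using (t1.2.mul t2.1).sub (t1.1.mul t2.2)
  have e1 : {t | t < T ∧ bU ν q c t = 0}.encard = (k - 1 : ℕ) := by
    rw [count_transfer ν q c T hq hc, hcj]; exact hjc
  have hfin : {t | t < T ∧ bU ν q c t = 0}.Finite := by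
    apply Set.finite_of_encard_eq_coe e1
  have h := sturm_count s1 s2 T hQ hW hfin
  rw [count_succ _ _ ((bU_zero_iff ν q c T hc).2 (by rw [hcj]; exact hjz)), e1,
    count_transfer μ p d T hp hd] at h
  have h2 : {x | x ∈ Ioo 0 (d * exp (p * T)) ∧ besselJ μ x = 0}.encard ≤ (k - 1 : ℕ) := by
    rw [← hjc']
    exact Set.encard_le_encard fun x hx => ⟨⟨hx.1.1, hx.1.2.trans_le hdj⟩, hx.2⟩
  have h3 := h.trans h2
  have h4 : (k - 1) + 1 ≤ k - 1 := by exact_mod_cast h3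
  omega

lemma zero_mono (ν μ : ℝ) (hμ : 0 < μ) (h : μ < ν) (k : ℕ) (j j' : ℝ)
    (hj : IsKthBesselZero ν k j) (hj' : IsKthBesselZero μ k j') : j' ≤ j := by
  by_contra hlt
  push Not at hlt
  have hj0 := hj.1
  refine bessel_compare ν 1 1 μ 1 1 (Real.log j) (hμ.trans h) one_pos one_pos hμ one_pos one_pos
    ?_ k j j' hj hj' ?_ ?_
  · intro t _
    nlinarith
  · rw [one_mul, one_mul, exp_log hj0]
  · rw [one_mul, one_mul, exp_log hj0]; exact hlt.le

lemma zero_div_anti (ν μ : ℝ) (hμ : 0 < μ) (h : μ < ν) (k : ℕ) (j j' : ℝ)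
    (hj : IsKthBesselZero ν k j) (hj' : IsKthBesselZero μ k j') : j / ν ≤ j' / μ := by
  by_contra hlt
  push Not at hlt
  have hj0 := hj.1
  have hj0' := hj'.1
  have hν : 0 < ν := hμ.trans h
  refine bessel_compare μ (1 / μ) j' ν (1 / ν) j 0 hμ (by positivity) hj0' hν (by positivity) hj0
    ?_ k j' j hj' hj (by simp) (by simp)
  intro t ht
  have e1 : (1 / μ) ^ 2 * ((j' * exp (1 / μ * t)) ^ 2 - μ ^ 2)
      = (j' / μ * exp (1 / μ * t)) ^ 2 - 1 := by field_simp
  have e2 : (1 / ν) ^ 2 * ((j * exp (1 / ν * t)) ^ 2 - ν ^ 2)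
      = (j / ν * exp (1 / ν * t)) ^ 2 - 1 := by field_simp
  rw [e1, e2]
  have h1 : 1 / ν < 1 / μ := one_div_lt_one_div_of_lt hμ h
  have h2 : exp (1 / μ * t) ≤ exp (1 / ν * t) := exp_le_exp.2 (by nlinarith)
  have h3 : j' / μ * exp (1 / μ * t) < j / ν * exp (1 / ν * t) :=
    mul_lt_mul hlt h2 (exp_pos _) (by positivity)
  have h4 : 0 < j' / μ * exp (1 / μ * t) := by positivity
  have := pow_lt_pow_left₀ h3 h4.le two_ne_zero
  linarith

lemma zero_le_same (ν : ℝ) (k : ℕ) (j j' : ℝ)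
    (hj : IsKthBesselZero ν k j) (hj' : IsKthBesselZero ν k j') : j' ≤ j := by
  by_contra hlt
  push Not at hlt
  have h1 : insert j {t : ℝ | t ∈ Set.Ioo 0 j ∧ besselJ ν t = 0} ⊆
      {t : ℝ | t ∈ Set.Ioo 0 j' ∧ besselJ ν t = 0} := by
    rintro t (rfl | ⟨ht, h0⟩)
    · exact ⟨⟨hj.1, hlt⟩, hj.2.1⟩
    · exact ⟨⟨ht.1, ht.2.trans hlt⟩, h0⟩
  have h2 := Set.encard_le_encard h1
  rw [Set.encard_insert_of_notMem (by simp), hj.2.2, hj'.2.2] at h2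
  have h4 : (k - 1) + 1 ≤ k - 1 := by exact_mod_cast h2
  omega

lemma zero_ratio (ν μ ε : ℝ) (hν : 0 < ν) (hμ : 0 < μ) (hε : 0 < ε) (h1 : 1 - ε < μ / ν)
    (h2 : μ / ν < 1 + ε) (k : ℕ) (j j' : ℝ)
    (hj : IsKthBesselZero ν k j) (hj' : IsKthBesselZero μ k j') :
    (1 - ε) * j' / μ < j / ν ∧ j / ν < (1 + ε) * j' / μ := by
  have p : 0 < j' / μ := div_pos hj'.1 hμ
  have e : μ / ν * (j' / μ) = j' / ν := by field_simp
  have a1 : (1 - ε) * (j' / μ) < j' / ν := by rw [← e]; gcongr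
  have a2 : j' / ν < (1 + ε) * (j' / μ) := by rw [← e]; gcongr
  rw [mul_div_assoc, mul_div_assoc]
  rcases lt_trichotomy μ ν with h | h | h
  · have b1 := zero_mono ν μ hμ h k j j' hj hj'
    have b2 := zero_div_anti ν μ hμ h k j j' hj hj'
    have b3 : j' / ν ≤ j / ν := by gcongr
    constructor <;> nlinarith
  · subst h
    have : j = j' := le_antisymm (zero_le_same μ k j' j hj' hj) (zero_le_same μ k j j' hj hj')
    subst this
    exact ⟨a1, a2⟩
  · have b1 := zero_mono μ ν hν h k j' j hj' hj
    have b2 := zero_div_anti μ ν hν h k j' j hj' hj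
    have b3 : j / ν ≤ j' / ν := by gcongr
    constructor <;> nlinarith

theorem stmt_12 (σ : ℝ) (hσ : 0 < σ) (ℓ k : ℕ → ℕ)
    (hℓpos : ∀ i, 0 < ℓ i) (hkpos : ∀ i, 0 < k i)
    (hℓmono : StrictMono ℓ) (hkmono : StrictMono k)
    (hlim : Tendsto (fun i => (ℓ i : ℝ) / (k i : ℝ)) atTop (nhds σ)) :
    ∀ ε : ℝ, 0 < ε → ∃ i₀ : ℕ, ∀ i : ℕ, i₀ ≤ i → ∀ j j' : ℝ,
      IsKthBesselZero (ℓ i) (k i) j → IsKthBesselZero (σ * k i) (k i) j' →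
        (1 - ε) * j' / (σ * k i) < j / ℓ i ∧ j / ℓ i < (1 + ε) * j' / (σ * k i) := by
  intro ε hε
  have hl : Tendsto (fun i => σ * (k i : ℝ) / (ℓ i : ℝ)) atTop (nhds 1) := by
    have := hlim.inv₀ hσ.ne' |>.const_mul σ
    rw [mul_inv_cancel₀ hσ.ne'] at this
    refine this.congr fun i => ?_
    rw [inv_div, mul_div_assoc]
  have hev := (hl.eventually (lt_mem_nhds (show 1 - ε < 1 by linarith))).and
    (hl.eventually (gt_mem_nhds (show 1 < 1 + ε by linarith)))
  obtain ⟨i₀, hi₀⟩ := eventually_atTop.1 hev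
  refine ⟨i₀, fun i hi j j' hj hj' => ?_⟩
  have hk : (0:ℝ) < k i := by exact_mod_cast hkpos i
  have hlp : (0:ℝ) < ℓ i := by exact_mod_cast hℓpos i
  exact zero_ratio (ℓ i) (σ * k i) ε hlp (by positivity) hε (hi₀ i hi).1 (hi₀ i hi).2 (k i) j j' hj hj'
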